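/- Let T be a sound, recursively axiomatized extension of elementary arithmetic, and let g be a recursive monotone function on arithmetic sentences such that for every consistent sentence φ: (1) φ ∧ Con_T(φ) implies g(φ), and (2) g(φ) strictly implies φ. Then for every true sentence φ there is a true sentence ψ such that ψ implies φ and [g(ψ)]_T = [ψ ∧ Con_T(ψ)]_T. -/

import Mathlib

open FirstOrder FirstOrder.Language

namespace ArithFormalization

/-- Function symbols of the first-order language of arithmetic: `0`, successor, `+`, `·`. -/
inductive Func : ℕ → Type
  | zero : Func 0
  | succ : Func 1
  | add : Func 2
  | mul : Func 2
  deriving DecidableEq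

/-- Relation symbols of the first-order language of arithmetic: `≤`. -/
inductive Rel : ℕ → Type
  | le : Rel 2
  deriving DecidableEq

/-- The first-order language of arithmetic. -/
def L : Language := ⟨Func, Rel⟩

/-- The standard model of arithmetic: `ℕ` as an `L`-structure. -/
instance natStructure : L.Structure ℕ where
  funMap {n} f v :=
    match f with
    | .zero => 0
    | .succ => v 0 + 1
    | .add => v 0 + v 1
    | .mul => v 0 * v 1
  RelMap {n} r v :=
    match r with
    | .le => v 0 ≤ v 1

instance : Encodable (Σ n, L.Functions n) :=
  Encodable.ofEquiv (Fin 4)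
    { toFun := fun x =>
        match x with
        | ⟨_, .zero⟩ => 0
        | ⟨_, .succ⟩ => 1
        | ⟨_, .add⟩ => 2
        | ⟨_, .mul⟩ => 3
      invFun := ![⟨0, .zero⟩, ⟨1, .succ⟩, ⟨2, .add⟩, ⟨2, .mul⟩]
      left_inv := by rintro ⟨_, f⟩ <;> cases f <;> rfl
      right_inv := by decide }

instance : Encodable (Σ n, L.Relations n) :=
  Encodable.ofEquiv (Fin 1)
    { toFun := fun _ => 0
      invFun := ![⟨2, .le⟩]
      left_inv := by rintro ⟨_, r⟩ <;> cases r <;> rfl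
      right_inv := by decide }

/-- Sentences of the language of arithmetic. -/
abbrev Sent : Type := L.Sentence

/-- A canonical Gödel numbering of sentences of arithmetic. -/
def gnum (φ : Sent) : ℕ :=
  Encodable.encode (BoundedFormula.listEncode φ)

/-- `φ` is true in the standard model `ℕ`. -/
def TrueInN (φ : Sent) : Prop := ℕ ⊨ φ

/-- `Prov T φ`: `φ` is provable from the theory `T` (by Gödel's completeness theorem,
provability coincides with semantic consequence). -/
def Prov (T : L.Theory) (φ : Sent) : Prop := T ⊨ᵇ φ

/-- `Implies T φ ψ`: `φ` implies `ψ` over `T`, i.e. `T + φ ⊢ ψ`. -/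
def Implies (T : L.Theory) (φ ψ : Sent) : Prop := Prov (T ∪ {φ}) ψ

/-- `φ` strictly implies `ψ` over `T`. -/
def StrictlyImplies (T : L.Theory) (φ ψ : Sent) : Prop :=
  Implies T φ ψ ∧ ¬ Implies T ψ φ

/-- The theory `T + φ` is consistent. -/
def ConsistentWith (T : L.Theory) (φ : Sent) : Prop := ¬ Implies T φ ⊥

/-- `[φ]_T = [ψ]_T`: `φ` and `ψ` are `T`-provably equivalent. -/
def EquivMod (T : L.Theory) (φ ψ : Sent) : Prop := Prov T (φ ⇔ ψ)

/-- The theory `T` is sound, i.e. all of its axioms are true in `ℕ`. -/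
def Sound (T : L.Theory) : Prop := ∀ φ ∈ T, TrueInN φ

/-- The theory `T` is recursively axiomatized: membership of (Gödel codes of) axioms
is decided by a total recursive function. -/
def RecursivelyAxiomatized (T : L.Theory) : Prop :=
  ∃ f : ℕ → Bool, Computable f ∧ ∀ φ : Sent, (φ ∈ T ↔ f (gnum φ) = true)

/-- A function on sentences is recursive if it is computed by a total recursive
function on Gödel codes. -/
def RecursiveFn (g : Sent → Sent) : Prop :=
  ∃ f : ℕ → ℕ, Computable f ∧ ∀ φ : Sent, f (gnum φ) = gnum (g φ)

/-- `g` is monotone over `T`: if `T ⊢ φ → ψ` then `T ⊢ g(φ) → g(ψ)`. -/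
def Monotone' (T : L.Theory) (g : Sent → Sent) : Prop :=
  ∀ φ ψ : Sent, Prov T (φ ⟹ ψ) → Prov T (g φ ⟹ g ψ)

/-- The atomic formula `t ≤ u`. -/
def leF {n : ℕ} (t u : L.Term (Empty ⊕ Fin n)) : L.BoundedFormula Empty n :=
  Relations.boundedFormula₂ (Rel.le : L.Relations 2) t u

/-- `Δ₀` (bounded) formulas of arithmetic: built from atomic formulas by propositional
connectives and bounded quantification `∀ x ≤ t`, `∃ x ≤ t`. -/
inductive IsDelta0 : ∀ {n : ℕ}, L.BoundedFormula Empty n → Prop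
  | falsum {n} : IsDelta0 (n := n) ⊥
  | equal {n} (t u : L.Term (Empty ⊕ Fin n)) : IsDelta0 (t.bdEqual u)
  | le {n} (t u : L.Term (Empty ⊕ Fin n)) : IsDelta0 (leF t u)
  | imp {n} {φ ψ : L.BoundedFormula Empty n} :
      IsDelta0 φ → IsDelta0 ψ → IsDelta0 (φ.imp ψ)
  | ball {n} (t : L.Term (Empty ⊕ Fin n)) {φ : L.BoundedFormula Empty (n + 1)} :
      IsDelta0 φ →
      IsDelta0 (((leF (Term.var (Sum.inr (Fin.last n)))
        (t.relabel (Sum.map id Fin.castSucc))).imp φ).all)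
  | bex {n} (t : L.Term (Empty ⊕ Fin n)) {φ : L.BoundedFormula Empty (n + 1)} :
      IsDelta0 φ →
      IsDelta0 (((leF (Term.var (Sum.inr (Fin.last n)))
        (t.relabel (Sum.map id Fin.castSucc))) ⊓ φ).ex)

/-- `φ` is a `Π₁` sentence: a block of universal quantifiers followed by a `Δ₀` matrix. -/
def IsPi1 (φ : Sent) : Prop :=
  ∃ (n : ℕ) (θ : L.BoundedFormula Empty n), IsDelta0 θ ∧ φ = θ.alls

/-- `φ` is a `Σ₁` sentence: a block of existential quantifiers followed by a `Δ₀` matrix. -/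
def IsSigma1 (φ : Sent) : Prop :=
  ∃ (n : ℕ) (θ : L.BoundedFormula Empty n), IsDelta0 θ ∧ φ = θ.exs

/-- Close the last `m` free variables of a bounded formula by universal quantifiers. -/
def allsFrom : ∀ (n m : ℕ), L.BoundedFormula Empty (n + m) → L.BoundedFormula Empty n
  | _, 0, φ => φ
  | n, m + 1, φ => allsFrom n m φ.all

/-- `φ` is a `Σ₂` sentence: `∃-block ∀-block Δ₀`. -/
def IsSigma2 (φ : Sent) : Prop :=
  ∃ (n m : ℕ) (θ : L.BoundedFormula Empty (n + m)), IsDelta0 θ ∧ φ = (allsFrom n m θ).exs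

/-- Hypotheses making `ea` a correct stand-in for elementary arithmetic `EA`:
it is sound, recursively axiomatized, and proves every true `Σ₁` sentence. -/
structure IsEA (ea : L.Theory) : Prop where
  sound : Sound ea
  recAx : RecursivelyAxiomatized ea
  sigma1_complete : ∀ φ : Sent, IsSigma1 φ → TrueInN φ → Prov ea φ

/-- Hypotheses making `con` a correct stand-in for the arithmetized consistency operator
`φ ↦ Con_T(φ)` (`Con` of the theory `T + φ`): each value is `Π₁`, its truth in `ℕ`
expresses exactly the consistency of `T + φ`, consistency statements are `T`-provably
antitone in the strength of `φ`, and Gödel's second incompleteness theorem holds for it. -/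
structure IsConOperator (T : L.Theory) (con : Sent → Sent) : Prop where
  pi1 : ∀ φ, IsPi1 (con φ)
  true_iff : ∀ φ, TrueInN (con φ) ↔ ConsistentWith T φ
  prov_mono : ∀ φ ψ, Implies T φ ψ → Prov T (con φ ⟹ con ψ)
  goedel2 : ∀ φ, ConsistentWith T φ → ¬ Implies T φ (con φ)


/-- The theory `T` is consistent. -/
def Consistent (T : L.Theory) : Prop := ¬ Prov T ⊥

theorem prov_iff (T : L.Theory) (φ : Sent) :
    Prov T φ ↔ ∀ M : Theory.ModelType.{0,0,0} T, (M : Type) ⊨ φ := by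
  unfold Prov
  exact Theory.models_sentence_iff

theorem implies_iff (T : L.Theory) (φ ψ : Sent) :
    Implies T φ ψ ↔ ∀ M : Theory.ModelType.{0,0,0} T, (M : Type) ⊨ φ → (M : Type) ⊨ ψ := by
  unfold Implies
  rw [prov_iff]
  constructor
  · intro h M hM
    haveI : (M : Type) ⊨ (T ∪ {φ}) :=
      Theory.model_union_iff.2 ⟨M.is_model, (Theory.model_singleton_iff).2 hM⟩
    exact h (Theory.ModelType.of (T ∪ {φ}) M)
  · intro h M
    have hM := Theory.model_union_iff.1 M.is_model
    haveI := hM.1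
    exact h (Theory.ModelType.of T M) (Theory.model_singleton_iff.1 hM.2)

/-- Montalbán–Walsh.  Let `T` be a sound, recursively axiomatized
extension of elementary arithmetic and `g` a recursive monotone function on sentences
such that for every consistent `φ`: (1) `φ ∧ Con_T(φ)` implies `g(φ)` and (2) `g(φ)`
strictly implies `φ`.  Then for every true `φ` there is a true `ψ` implying `φ` with
`[g(ψ)]_T = [ψ ∧ Con_T(ψ)]_T`. -/
theorem statement_0
    (T ea : L.Theory) (hT_sound : Sound T) (hT_rec : RecursivelyAxiomatized T)
    (hea : IsEA ea) (hext : ea ⊆ T)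
    (con : Sent → Sent) (hcon : IsConOperator T con)
    (g : Sent → Sent) (hg_rec : RecursiveFn g) (hg_mono : Monotone' T g)
    (h1 : ∀ φ : Sent, ConsistentWith T φ → Implies T (φ ⊓ con φ) (g φ))
    (h2 : ∀ φ : Sent, ConsistentWith T φ → StrictlyImplies T (g φ) φ) :
    ∀ φ : Sent, TrueInN φ → ∃ ψ : Sent, TrueInN ψ ∧ Implies T ψ φ ∧
      EquivMod T (g ψ) (ψ ⊓ con ψ) := by
  intro φ hφ
  haveI : (ℕ : Type) ⊨ T := (Theory.model_iff T).2 hT_sound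
  have hN : ∀ χ : Sent, TrueInN χ → ConsistentWith T χ := by
    intro χ hχ h
    rw [implies_iff] at h
    exact h (Theory.ModelType.of T ℕ) hχ
  have himp : ∀ (M : Type) [L.Structure M] [Nonempty M] (a b : Sent),
      M ⊨ (a ⟹ b) ↔ (M ⊨ a → M ⊨ b) := fun M _ _ a b => BoundedFormula.realize_imp
  have hinf : ∀ (M : Type) [L.Structure M] [Nonempty M] (a b : Sent),
      M ⊨ (a ⊓ b) ↔ (M ⊨ a ∧ M ⊨ b) := fun M _ _ a b => BoundedFormula.realize_inf
  have hiff : ∀ (M : Type) [L.Structure M] [Nonempty M] (a b : Sent),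
      M ⊨ (a ⇔ b) ↔ (M ⊨ a ↔ M ⊨ b) := fun M _ _ a b => BoundedFormula.realize_iff
  have hbot : ∀ (M : Type) [L.Structure M] [Nonempty M], ¬ M ⊨ (⊥ : Sent) :=
    fun M _ _ h => h
  set δ : Sent := φ ⊓ (g φ ⟹ ⊥) with hδ
  set ψ : Sent := φ ⊓ (g φ ⟹ con δ) with hψ
  have hδc : ConsistentWith T δ := by
    intro h
    apply (h2 φ (hN φ hφ)).2
    rw [implies_iff] at h ⊢
    intro M hM
    by_contra hc
    refine hbot M (h M ?_)
    rw [hδ, hinf, himp]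
    exact ⟨hM, fun h => absurd h hc⟩
  have hψt : TrueInN ψ := by
    unfold TrueInN
    rw [hψ, hinf, himp]
    exact ⟨hφ, fun _ => (hcon.true_iff δ).2 hδc⟩
  have hψφ : ∀ M : Theory.ModelType.{0,0,0} T, (M : Type) ⊨ ψ → (M : Type) ⊨ φ := by
    intro M hM
    rw [hψ, hinf] at hM
    exact hM.1
  have hmono : Prov T (g ψ ⟹ g φ) := by
    apply hg_mono
    rw [prov_iff]
    intro M
    rw [himp]
    exact hψφ M
  have hcm : Prov T (con δ ⟹ con ψ) := by
    apply hcon.prov_mono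
    rw [implies_iff]
    intro M hM
    rw [hδ, hinf, himp] at hM
    rw [hψ, hinf, himp]
    exact ⟨hM.1, fun h => absurd (hM.2 h) (hbot M)⟩
  have e1 := (implies_iff _ _ _).1 (h1 ψ (hN ψ hψt))
  have e2 := (implies_iff _ _ _).1 (h2 ψ (hN ψ hψt)).1
  rw [prov_iff] at hmono hcm
  refine ⟨ψ, hψt, (implies_iff _ _ _).2 hψφ, (prov_iff _ _).2 fun M => ?_⟩
  rw [hiff]
  refine ⟨fun h => ?_, e1 M⟩
  have a := e2 M h
  have b := (himp M _ _).1 (hmono M) h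
  rw [hinf]
  refine ⟨a, (himp M _ _).1 (hcm M) ?_⟩
  rw [hψ, hinf, himp] at a
  exact a.2 b

end ArithFormalization
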